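/- Let G = SL₂(ℝ), let dg be the measure on G obtained as the pushforward of (2π y²)^{−1} dx dy dθ under the Iwasawa parametrization (x,y,θ) ↦ n[x]·a[y]·k[θ], (x,y,θ) ∈ ℝ × (0,∞) × [0,2π). For integrable f₁, f₂ : G → ℂ define the convolution (f₁ * f₂)(h) = ∫_G f₁(g⁻¹h) f₂(g) dg, the Abel transform (𝒜f)(a[y]) = y^{1/2} ∫_ℝ f(a[y]·n[x]) dx, and for F₁, F₂ on the diagonal subgroup A = {a[y] : y > 0} the convolution (F₁ *_A F₂)(a[y]) = ∫₀^∞ F₁(a[y/y₀]) F₂(a[y₀]) dy₀/y₀. Let ℓ ∈ ℤ and let f₁, f₂ : G → ℂ be continuous and compactly supported, with f₁ of left type ℓ (i.e. f₁(k[θ]g) = e^{iℓθ} f₁(g) for all θ, g) and f₂ of right type ℓ (i.e. f₂(g·k[θ]) = e^{iℓθ} f₂(g) for all θ, g). Then 𝒜(f₁ * f₂) = (𝒜f₁) *_A (𝒜f₂). -/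

import Mathlib

open MeasureTheory Complex

noncomputable section

instance : MeasurableSpace (Matrix (Fin 2) (Fin 2) ℝ) :=
  inferInstanceAs (MeasurableSpace (Fin 2 → Fin 2 → ℝ))

/-- `n[x] = (1, x; 0, 1)`. -/
def nMat (x : ℝ) : Matrix (Fin 2) (Fin 2) ℝ := !![1, x; 0, 1]

/-- `a[y] = diag(√y, 1/√y)`. -/
def aMat (y : ℝ) : Matrix (Fin 2) (Fin 2) ℝ :=
  !![Real.sqrt y, 0; 0, (Real.sqrt y)⁻¹]

/-- `k[θ] = (cos θ, sin θ; −sin θ, cos θ)`. -/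
def kMat (θ : ℝ) : Matrix (Fin 2) (Fin 2) ℝ :=
  !![Real.cos θ, Real.sin θ; -Real.sin θ, Real.cos θ]

/-- The Haar measure of `SL₂(ℝ)` (supported on `SL₂(ℝ)` inside the space of matrices):
the pushforward of `(2π y²)⁻¹ dx dy dθ` under `(x,y,θ) ↦ n[x]·a[y]·k[θ]`,
`(x,y,θ) ∈ ℝ × (0,∞) × [0,2π)`. -/
def haarSL2 : Measure (Matrix (Fin 2) (Fin 2) ℝ) :=
  Measure.map (fun p : ℝ × ℝ × ℝ => nMat p.1 * aMat p.2.1 * kMat p.2.2)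
    ((((volume : Measure (ℝ × ℝ × ℝ)).restrict
        (Set.univ ×ˢ Set.Ioi 0 ×ˢ Set.Ico 0 (2 * Real.pi))).withDensity
      fun p => ENNReal.ofReal (1 / (2 * Real.pi * p.2.1 ^ 2))))

/-- Convolution on `SL₂(ℝ)`: `(f₁ * f₂)(h) = ∫ f₁(g⁻¹h) f₂(g) dg`. -/
def convG (f₁ f₂ : Matrix (Fin 2) (Fin 2) ℝ → ℂ) (h : Matrix (Fin 2) (Fin 2) ℝ) : ℂ :=
  ∫ g, f₁ (g⁻¹ * h) * f₂ g ∂haarSL2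

/-- The Abel transform `(𝒜f)(a[y]) = y^{1/2} ∫ f(a[y]·n[x]) dx`, as a function of `y`. -/
def abelT (f : Matrix (Fin 2) (Fin 2) ℝ → ℂ) (y : ℝ) : ℂ :=
  (Real.sqrt y : ℂ) * ∫ x : ℝ, f (aMat y * nMat x)

/-- Convolution on the diagonal subgroup `A`:
`(F₁ *_A F₂)(a[y]) = ∫₀^∞ F₁(a[y/y₀]) F₂(a[y₀]) dy₀/y₀`, as a function of `y`. -/
def convA (F₁ F₂ : ℝ → ℂ) (y : ℝ) : ℂ :=
  ∫ y₀ in Set.Ioi (0 : ℝ), F₁ (y / y₀) * F₂ y₀ * ((y₀⁻¹ : ℝ) : ℂ)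

instance borelMat : BorelSpace (Matrix (Fin 2) (Fin 2) ℝ) :=
  inferInstanceAs (BorelSpace (Fin 2 → Fin 2 → ℝ))

lemma measurable_mat {α : Type*} [MeasurableSpace α] {F : α → Matrix (Fin 2) (Fin 2) ℝ}
    (h : ∀ i j, Measurable fun a => F a i j) : Measurable F :=
  measurable_pi_lambda (X := fun _ : Fin 2 => Fin 2 → ℝ) _
    fun i => measurable_pi_lambda _ fun j => h i j

lemma measurable_entry (i j : Fin 2) :
    Measurable fun g : Matrix (Fin 2) (Fin 2) ℝ => g i j :=
  (by fun_prop : Continuous fun g : Matrix (Fin 2) (Fin 2) ℝ => g i j).measurable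

lemma measurable_inv_mul (h : Matrix (Fin 2) (Fin 2) ℝ) :
    Measurable fun g : Matrix (Fin 2) (Fin 2) ℝ => g⁻¹ * h := by
  have e := measurable_entry
  apply measurable_mat
  intro i j
  simp only [Matrix.inv_def, Matrix.mul_apply, Fin.sum_univ_two, Matrix.smul_apply,
    Ring.inverse_eq_inv', Matrix.det_fin_two, Matrix.adjugate_fin_two, smul_eq_mul]
  have hd : Measurable fun g : Matrix (Fin 2) (Fin 2) ℝ => (g 0 0 * g 1 1 - g 0 1 * g 1 0)⁻¹ :=
    (((e 0 0).mul (e 1 1)).sub ((e 0 1).mul (e 1 0))).inv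
  have hb : ∀ a b : Fin 2, Measurable fun g : Matrix (Fin 2) (Fin 2) ℝ =>
      (!![g 1 1, -g 0 1; -g 1 0, g 0 0] : Matrix (Fin 2) (Fin 2) ℝ) a b := by
    intro a b
    fin_cases a <;> fin_cases b <;> simp
    exacts [e 1 1, e 0 1, e 1 0, e 0 0]
  exact ((hd.mul (hb i 0)).mul_const _).add ((hd.mul (hb i 1)).mul_const _)

lemma measurable_iwasawa :
    Measurable (fun p : ℝ × ℝ × ℝ => nMat p.1 * aMat p.2.1 * kMat p.2.2) := by
  apply measurable_mat
  intro i j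
  fin_cases i <;> fin_cases j <;>
    simp [nMat, aMat, kMat, Matrix.mul_apply, Fin.sum_univ_two] <;> fun_prop

lemma an_eq (t s : ℝ) : aMat t * nMat s = !![√t, √t * s; 0, (√t)⁻¹] := by
  ext i j
  fin_cases i <;> fin_cases j <;> simp [nMat, aMat, Matrix.mul_apply, Fin.sum_univ_two]

lemma na_eq {t : ℝ} (ht : 0 < t) (u : ℝ) : nMat u * aMat t = aMat t * nMat (u / t) := by
  have h : √t ≠ 0 := (Real.sqrt_pos.2 ht).ne'
  have h2 : √t * √t = t := Real.mul_self_sqrt ht.le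
  rw [an_eq]
  ext i j
  fin_cases i <;> fin_cases j <;> simp [nMat, aMat, Matrix.mul_apply, Fin.sum_univ_two]
  have h3 : u / t = u / √t / √t := by rw [div_div, h2]
  rw [h3]; field_simp

lemma kk_eq (θ : ℝ) : kMat θ * kMat (-θ) = 1 := by
  have := Real.sin_sq_add_cos_sq θ
  ext i j
  fin_cases i <;> fin_cases j <;> simp [kMat, Matrix.mul_apply, Fin.sum_univ_two] <;> nlinarith

lemma aa_eq {t y : ℝ} (ht : 0 < t) (hy : 0 < y) : aMat t * aMat (y / t) = aMat y := by
  have h : √t ≠ 0 := (Real.sqrt_pos.2 ht).ne'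
  have h' : √y ≠ 0 := (Real.sqrt_pos.2 hy).ne'
  ext i j
  fin_cases i <;> fin_cases j <;>
    simp [aMat, Matrix.mul_apply, Fin.sum_univ_two, Real.sqrt_div hy.le] <;> field_simp

lemma nn_eq (u v : ℝ) : nMat u * nMat v = nMat (u + v) := by
  ext i j
  fin_cases i <;> fin_cases j <;> simp [nMat, Matrix.mul_apply, Fin.sum_univ_two, add_comm]

lemma inv_mul_eq' {t y : ℝ} (ht : 0 < t) (hy : 0 < y) (u θ x : ℝ) :
    (nMat u * aMat t * kMat θ)⁻¹ * (aMat y * nMat x)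
      = kMat (-θ) * (aMat (y / t) * nMat (x - u / y)) := by
  have hdet : IsUnit (nMat u * aMat t * kMat θ).det := by
    have h : √t ≠ 0 := (Real.sqrt_pos.2 ht).ne'
    have := Real.sin_sq_add_cos_sq θ
    have : (nMat u * aMat t * kMat θ).det = 1 := by
      rw [Matrix.det_mul, Matrix.det_mul]
      simp only [nMat, aMat, kMat, Matrix.det_fin_two_of, mul_inv_cancel₀ h]
      nlinarith
    rw [this]; exact isUnit_one
  have key : aMat y * nMat x = (nMat u * aMat t * kMat θ) *
      (kMat (-θ) * (aMat (y / t) * nMat (x - u / y))) := by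
    calc aMat y * nMat x = aMat y * (nMat (u / y) * nMat (x - u / y)) := by
          rw [nn_eq]; congr 2; ring
      _ = nMat u * aMat y * nMat (x - u / y) := by rw [← mul_assoc, ← na_eq hy]
      _ = nMat u * (aMat t * 1 * aMat (y / t)) * nMat (x - u / y) := by
          rw [mul_one, aa_eq ht hy]
      _ = _ := by rw [← kk_eq θ]; simp only [mul_assoc]
  rw [key, Matrix.nonsing_inv_mul_cancel_left _ _ hdet]

lemma exists_entry_bound {f : Matrix (Fin 2) (Fin 2) ℝ → ℂ} (hs : HasCompactSupport f) :
    ∃ C : ℝ, ∀ g, f g ≠ 0 → ∀ i j, |g i j| ≤ C := by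
  have : ∀ i j : Fin 2, ∃ C : ℝ, ∀ g, f g ≠ 0 → |g i j| ≤ C := by
    intro i j
    obtain ⟨C, hC⟩ := IsCompact.exists_bound_of_continuousOn (f := fun g : Matrix (Fin 2) (Fin 2) ℝ => g i j)
      hs (by fun_prop)
    exact ⟨C, fun g hg => hC g (subset_tsupport f hg)⟩
  choose C hC using this
  refine ⟨max (max (C 0 0) (C 0 1)) (max (C 1 0) (C 1 1)), fun g hg i j => (hC i j g hg).trans ?_⟩
  fin_cases i <;> fin_cases j <;> simp

/-- The measure in Iwasawa coordinates without the density. -/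
def mu3 : Measure (ℝ × ℝ × ℝ) :=
  (volume : Measure ℝ).prod (((volume : Measure ℝ).restrict (Set.Ioi 0)).prod
    ((volume : Measure ℝ).restrict (Set.Ico 0 (2 * Real.pi))))

lemma mu3_eq : (volume : Measure (ℝ × ℝ × ℝ)).restrict
        (Set.univ ×ˢ Set.Ioi 0 ×ˢ Set.Ico 0 (2 * Real.pi)) = mu3 := by
  rw [mu3, Measure.prod_restrict, Measure.volume_eq_prod, ← Measure.prod_restrict,
    Measure.restrict_univ, ← Measure.volume_eq_prod]

instance : SFinite mu3 := by unfold mu3; infer_instance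

lemma mu3_pos : ∀ᵐ p ∂mu3, 0 < p.2.1 := by
  rw [← mu3_eq]
  filter_upwards [ae_restrict_mem (by measurability)] with p hp
  exact hp.2.1

/-- The integrand. -/
def Phi (f₁ f₂ : Matrix (Fin 2) (Fin 2) ℝ → ℂ) (y x : ℝ) (p : ℝ × ℝ × ℝ) : ℂ :=
  ((1 / (2 * Real.pi * p.2.1 ^ 2) : ℝ) : ℂ) * (f₁ (aMat (y / p.2.1) * nMat (x - p.1 / y)) *
    f₂ (aMat p.2.1 * nMat (p.1 / p.2.1)))

lemma measurable_Phi (f₁ f₂ : Matrix (Fin 2) (Fin 2) ℝ → ℂ) (hc₁ : Continuous f₁)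
    (hc₂ : Continuous f₂) (y : ℝ) :
    Measurable (fun q : ℝ × (ℝ × ℝ × ℝ) => Phi f₁ f₂ y q.1 q.2) := by
  unfold Phi
  refine Measurable.mul (by fun_prop) (Measurable.mul ?_ ?_)
  · refine hc₁.measurable.comp (measurable_mat fun i j => ?_)
    simp only [an_eq]
    fin_cases i <;> fin_cases j <;> simp <;> fun_prop
  · refine hc₂.measurable.comp (measurable_mat fun i j => ?_)
    simp only [an_eq]
    fin_cases i <;> fin_cases j <;> simp <;> fun_prop

lemma bound_aux {C y t u x : ℝ} (hy : 0 < y) (ht : 0 < t) 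
    (h1 : |√(y / t) * (x - u / y)| ≤ C) (h2 : |√t| ≤ C) (h3 : |√t * (u / t)| ≤ C)
    (h4 : |(√t)⁻¹| ≤ C) :
    |u| ≤ C ^ 2 + C ^ 2 / y + C ^ 2 / √y ∧ |x| ≤ C ^ 2 + C ^ 2 / y + C ^ 2 / √y ∧
      t ≤ C ^ 2 ∧ 1 / t ^ 2 ≤ C ^ 4 := by
  have hs : 0 < √t := Real.sqrt_pos.2 ht
  have hsy : 0 < √y := Real.sqrt_pos.2 hy
  have hts : √t * √t = t := Real.mul_self_sqrt ht.le
  rw [abs_of_pos hs] at h2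
  rw [abs_of_pos (inv_pos.2 hs)] at h4
  have hC : 0 < C := hs.trans_le h2
  have e3 : √t * (u / t) = u / √t := by
    have h3 : u / t = u / √t / √t := by rw [div_div, hts]
    rw [h3]; field_simp
  rw [e3, abs_div, abs_of_pos hs, div_le_iff₀ hs] at h3
  have hu : |u| ≤ C ^ 2 := by nlinarith
  rw [Real.sqrt_div hy.le, abs_mul, abs_of_pos (div_pos hsy hs), div_mul_eq_mul_div,
    div_le_iff₀ hs] at h1
  have hx : |x - u / y| ≤ C ^ 2 / √y := by
    rw [le_div_iff₀ hsy]; nlinarith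
  have huy : |u / y| ≤ C ^ 2 / y := by
    rw [abs_div, abs_of_pos hy]; gcongr
  have p1 : 0 ≤ C ^ 2 / y := by positivity
  have p2 : 0 ≤ C ^ 2 / √y := by positivity
  have p3 : 0 ≤ C ^ 2 := by positivity
  refine ⟨by linarith, ?_, by nlinarith, ?_⟩
  · have := abs_add_le (x - u / y) (u / y)
    rw [sub_add_cancel] at this
    linarith
  · have : 1 / t ^ 2 = ((√t)⁻¹) ^ 4 := by
      rw [inv_pow, show √t ^ 4 = (√t * √t) ^ 2 by ring, hts, one_div]
    rw [this]; gcongr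

lemma integrable_Phi (f₁ f₂ : Matrix (Fin 2) (Fin 2) ℝ → ℂ) (hc₁ : Continuous f₁)
    (hc₂ : Continuous f₂) (hs₁ : HasCompactSupport f₁) (hs₂ : HasCompactSupport f₂)
    {y : ℝ} (hy : 0 < y) :
    Integrable (Function.uncurry (Phi f₁ f₂ y)) ((volume : Measure ℝ).prod mu3) := by
  obtain ⟨C₁, hC₁⟩ := exists_entry_bound hs₁
  obtain ⟨C₂, hC₂⟩ := exists_entry_bound hs₂
  obtain ⟨M₁, hM₁⟩ := hs₁.exists_bound_of_continuous hc₁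
  obtain ⟨M₂, hM₂⟩ := hs₂.exists_bound_of_continuous hc₂
  set C := max C₁ C₂
  set R := C ^ 2 + C ^ 2 / y + C ^ 2 / √y
  set B : Set (ℝ × ℝ × ℝ × ℝ) :=
    Set.Icc (-R) R ×ˢ Set.Icc (-R) R ×ˢ Set.Icc 0 (C ^ 2) ×ˢ Set.univ
  have hB : MeasurableSet B := by measurability
  have hfin : ((volume : Measure ℝ).prod mu3) B ≠ ⊤ := by
    simp only [B, mu3, Measure.prod_prod]
    refine ENNReal.mul_ne_top (by simp) (ENNReal.mul_ne_top (by simp) (ENNReal.mul_ne_top ?_ ?_))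
    · exact ((Measure.restrict_apply_le _ _).trans_lt (by simp)).ne
    · exact measure_ne_top _ _
  have hint : Integrable (B.indicator fun _ => C ^ 4 * (M₁ * M₂)) ((volume : Measure ℝ).prod mu3) := by
    rw [integrable_indicator_iff hB]
    exact integrableOn_const hfin
  refine hint.mono' (measurable_Phi f₁ f₂ hc₁ hc₂ y).aestronglyMeasurable ?_
  have hpos : ∀ᵐ q ∂((volume : Measure ℝ).prod mu3), 0 < q.2.2.1 :=
    Measure.quasiMeasurePreserving_snd.ae mu3_pos
  filter_upwards [hpos] with q ht
  obtain ⟨x, u, t, θ⟩ := q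
  simp only at ht
  have hM0₁ : 0 ≤ M₁ := (norm_nonneg _).trans (hM₁ 0)
  have hM0₂ : 0 ≤ M₂ := (norm_nonneg _).trans (hM₂ 0)
  by_cases h0 : Phi f₁ f₂ y x (u, t, θ) = 0
  · simp only [Function.uncurry, h0, norm_zero]
    exact Set.indicator_nonneg (fun _ _ => by positivity) _
  have h1 : f₁ (aMat (y / t) * nMat (x - u / y)) ≠ 0 := by
    intro h; exact h0 (by simp [Phi, h])
  have h2 : f₂ (aMat t * nMat (u / t)) ≠ 0 := by
    intro h; exact h0 (by simp [Phi, h])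
  have k1 := hC₁ _ h1 0 1
  have k2 := hC₂ _ h2 0 0
  have k3 := hC₂ _ h2 0 1
  have k4 := hC₂ _ h2 1 1
  rw [an_eq] at k1 k2 k3 k4
  simp only [Matrix.of_apply, Matrix.cons_val', Matrix.cons_val_zero, Matrix.cons_val_one,
    Matrix.cons_val_fin_one] at k1 k2 k3 k4
  obtain ⟨b1, b2, b3, b4⟩ := bound_aux hy ht (k1.trans (le_max_left C₁ C₂))
    (k2.trans (le_max_right C₁ C₂)) (k3.trans (le_max_right C₁ C₂)) (k4.trans (le_max_right C₁ C₂))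
  have hmem : (x, u, t, θ) ∈ B := ⟨abs_le.1 b2, abs_le.1 b1, ⟨ht.le, b3⟩, trivial⟩
  rw [Set.indicator_of_mem hmem]
  simp only [Function.uncurry, Phi, norm_mul, Complex.norm_real]
  have hd : ‖1 / (2 * Real.pi * t ^ 2)‖ ≤ C ^ 4 := by
    rw [Real.norm_of_nonneg (by positivity)]
    refine le_trans ?_ b4
    apply one_div_le_one_div_of_le (by positivity)
    have := Real.pi_gt_three
    nlinarith [sq_nonneg t]
  gcongr
  · exact hM₁ _
  · exact hM₂ _

lemma convG_eq (ℓ : ℤ) (f₁ f₂ : Matrix (Fin 2) (Fin 2) ℝ → ℂ)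
    (hc₁ : Continuous f₁) (hc₂ : Continuous f₂)
    (htype₁ : ∀ (θ : ℝ) (g : Matrix (Fin 2) (Fin 2) ℝ),
      f₁ (kMat θ * g) = Complex.exp (Complex.I * (ℓ : ℂ) * (θ : ℂ)) * f₁ g)
    (htype₂ : ∀ (θ : ℝ) (g : Matrix (Fin 2) (Fin 2) ℝ),
      f₂ (g * kMat θ) = Complex.exp (Complex.I * (ℓ : ℂ) * (θ : ℂ)) * f₂ g)
    {y : ℝ} (hy : 0 < y) (x : ℝ) :
    convG f₁ f₂ (aMat y * nMat x) = ∫ p, Phi f₁ f₂ y x p ∂mu3 := by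
  unfold convG haarSL2
  rw [integral_map measurable_iwasawa.aemeasurable, mu3_eq,
    integral_withDensity_eq_integral_toReal_smul (by fun_prop) (by simp)]
  · apply integral_congr_ae
    filter_upwards [mu3_pos] with p ht
    rw [inv_mul_eq' ht hy, htype₁, htype₂, na_eq ht, ENNReal.toReal_ofReal (by positivity),
      Complex.real_smul, Phi]
    congr 1
    have : Complex.exp (Complex.I * ℓ * ((-p.2.2 : ℝ) : ℂ)) * Complex.exp (Complex.I * ℓ * (p.2.2 : ℂ)) = 1 := by
      rw [← Complex.exp_add]; simp
    linear_combination (f₁ (aMat (y / p.2.1) * nMat (x - p.1 / y)) *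
      f₂ (aMat p.2.1 * nMat (p.1 / p.2.1))) * this
  · exact ((hc₁.measurable.comp (measurable_inv_mul _)).mul hc₂.measurable).aestronglyMeasurable

/-- Lemma 8.3: the Abel transform turns convolution on `G` into
convolution on `A`.  If `f₁` has left type `ℓ` and `f₂` has right type `ℓ`, both continuous
and compactly supported, then `𝒜(f₁ * f₂) = (𝒜f₁) *_A (𝒜f₂)`. -/
theorem abel_transform_convolution (ℓ : ℤ) (f₁ f₂ : Matrix (Fin 2) (Fin 2) ℝ → ℂ)
    (hc₁ : Continuous f₁) (hc₂ : Continuous f₂)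
    (hs₁ : HasCompactSupport f₁) (hs₂ : HasCompactSupport f₂)
    (htype₁ : ∀ (θ : ℝ) (g : Matrix (Fin 2) (Fin 2) ℝ),
      f₁ (kMat θ * g) = Complex.exp (Complex.I * (ℓ : ℂ) * (θ : ℂ)) * f₁ g)
    (htype₂ : ∀ (θ : ℝ) (g : Matrix (Fin 2) (Fin 2) ℝ),
      f₂ (g * kMat θ) = Complex.exp (Complex.I * (ℓ : ℂ) * (θ : ℂ)) * f₂ g) :
    ∀ y : ℝ, 0 < y → abelT (convG f₁ f₂) y = convA (abelT f₁) (abelT f₂) y := by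
  intro y hy
  have hI := integrable_Phi f₁ f₂ hc₁ hc₂ hs₁ hs₂ hy
  have hsy : √y ≠ 0 := (Real.sqrt_pos.2 hy).ne'
  set J₁ : ℝ → ℂ := fun t => ∫ x : ℝ, f₁ (aMat (y / t) * nMat x) with hJ₁
  set J₂ : ℝ → ℂ := fun t => ∫ x : ℝ, f₂ (aMat t * nMat x) with hJ₂
  have hx : ∀ p : ℝ × ℝ × ℝ, ∫ x, Phi f₁ f₂ y x p =
      ((1 / (2 * Real.pi * p.2.1 ^ 2) : ℝ) : ℂ) * (J₁ p.2.1 *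
        f₂ (aMat p.2.1 * nMat (p.1 / p.2.1))) := by
    intro p
    simp only [Phi]
    rw [integral_const_mul, integral_mul_const,
      integral_sub_right_eq_self (fun x => f₁ (aMat (y / p.2.1) * nMat x)) (p.1 / y)]
  have hI2 := hI.integral_prod_right
  simp only [Function.uncurry] at hI2
  simp only [hx] at hI2
  have hu : ∀ r : ℝ × ℝ, ∫ u : ℝ, ((1 / (2 * Real.pi * r.1 ^ 2) : ℝ) : ℂ) * (J₁ r.1 *
        f₂ (aMat r.1 * nMat (u / r.1))) =
      ((1 / (2 * Real.pi * r.1 ^ 2) : ℝ) : ℂ) * (J₁ r.1 * ((|r.1| : ℝ) • J₂ r.1)) := by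
    intro r
    rw [integral_const_mul, integral_const_mul,
      Measure.integral_comp_div (fun u => f₂ (aMat r.1 * nMat u)) r.1]
  unfold abelT convA
  simp only [convG_eq ℓ f₁ f₂ hc₁ hc₂ htype₁ htype₂ hy]
  rw [integral_integral_swap hI]
  simp only [hx]
  rw [mu3] at hI2 ⊢
  rw [integral_prod_symm _ hI2]
  simp only [hu]
  rw [integral_fun_fst (fun t : ℝ => ((1 / (2 * Real.pi * t ^ 2) : ℝ) : ℂ) *
    (J₁ t * ((|t| : ℝ) • J₂ t)))]
  have hv : ((volume : Measure ℝ).restrict (Set.Ico 0 (2 * Real.pi))).real Set.univ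
      = 2 * Real.pi := by
    simp [Real.pi_pos.le]
  rw [hv, Complex.real_smul, ← integral_const_mul, ← integral_const_mul]
  apply setIntegral_congr_fun measurableSet_Ioi
  intro t ht
  have ht : 0 < t := ht
  have hst : √t ≠ 0 := (Real.sqrt_pos.2 ht).ne'
  have hts : √t * √t = t := Real.mul_self_sqrt ht.le
  simp only [Complex.real_smul, abs_of_pos ht]
  have hr : √y * (2 * Real.pi * (1 / (2 * Real.pi * t ^ 2) * t)) = √(y / t) * √t * t⁻¹ := by
    have := Real.pi_ne_zero
    rw [Real.sqrt_div hy.le]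
    field_simp
  have hr' := congrArg (fun r : ℝ => (r : ℂ)) hr
  simp only [Complex.ofReal_mul] at hr'
  push_cast at hr' ⊢
  linear_combination (J₁ t * J₂ t) * hr'

end
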